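/- arXiv:2206.04913 — 3 statements merged into one kernel-verified Lean document; each statement's English description precedes it below -/
import Mathlib

section
/- Let S = {S_1, …, S_i} be a self semi-induced matching in a simple hypergraph H, let k ≥ 1, and let u_1, …, u_k ∈ {1, …, i} be indices (not necessarily distinct). If E_1, …, E_k are edges of H such that the monomial m(E_1)⋯m(E_k) divides m(S_{u_1})⋯m(S_{u_k}) in R, then the multiset {E_1, …, E_k} is equal to the multiset {S_{u_1}, …, S_{u_k}}. -/
open MvPolynomial

/-- If `S = {S_1, …, S_i}` is a self semi-induced matching in a simple hypergraph `H`,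
`k ≥ 1`, `u_1, …, u_k` are (not necessarily distinct) indices and `E_1, …, E_k` are
edges of `H` whose monomial product divides `m(S_{u_1})⋯m(S_{u_k})`, then the
multiset `{E_1, …, E_k}` equals the multiset `{S_{u_1}, …, S_{u_k}}`. -/
theorem stmt_0 {V K : Type*} [Fintype V] [DecidableEq V] [Field K]
    (H : Finset (Finset V))
    (hedge : ∀ e ∈ H, 2 ≤ e.card)
    (hsimple : ∀ e ∈ H, ∀ e' ∈ H, e ⊆ e' → e = e')
    {i : ℕ} (S : Fin i → Finset V)
    (hSinj : Function.Injective S)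
    (hSH : ∀ r, S r ∈ H)
    (hself : ∀ r : Fin i, ¬ S r ⊆ (Finset.univ.erase r).sup S)
    (hsemi : ∀ e ∈ H, e ⊆ Finset.univ.sup S → ∃ r, e = S r)
    {k : ℕ} (hk : 1 ≤ k) (u : Fin k → Fin i)
    (E : Fin k → Finset V) (hE : ∀ j, E j ∈ H)
    (hdvd : (∏ j, ∏ v ∈ E j, (X v : MvPolynomial V K)) ∣
        ∏ j, ∏ v ∈ S (u j), (X v : MvPolynomial V K)) :
    Multiset.map E Finset.univ.val = Multiset.map (fun j => S (u j)) Finset.univ.val := by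
  classical
  have hmon : ∀ F : Fin k → Finset V, (∏ j, ∏ v ∈ F j, (X v : MvPolynomial V K)) =
      monomial (∑ j, ∑ v ∈ F j, Finsupp.single v 1) 1 := by
    intro F
    simp [monomial_sum_one, X]
  have hcoef : ∀ (F : Fin k → Finset V) (v : V),
      (∑ j, ∑ v ∈ F j, Finsupp.single v 1 : V →₀ ℕ) v =
        (Finset.univ.filter (fun j => v ∈ F j)).card := by
    intro F v
    simp [Finsupp.finsetSum_apply, Finsupp.single_apply]
  have hle : ∀ v, (Finset.univ.filter (fun j => v ∈ E j)).card ≤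
      (Finset.univ.filter (fun j => v ∈ S (u j))).card := by
    intro v
    rw [hmon, hmon (fun j => S (u j)), monomial_dvd_monomial] at hdvd
    have h := (hdvd.1.resolve_left one_ne_zero) v
    rw [hcoef, hcoef] at h
    exact h
  have hw : ∀ j, ∃ r, E j = S r := by
    intro j
    apply hsemi _ (hE j)
    intro v hv
    have h1 : 0 < (Finset.univ.filter (fun j => v ∈ E j)).card :=
      Finset.card_pos.2 ⟨j, by simp [hv]⟩
    obtain ⟨j', hj'⟩ := Finset.card_pos.1 (h1.trans_le (hle v))
    rw [Finset.mem_sup]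
    exact ⟨u j', Finset.mem_univ _, (Finset.mem_filter.1 hj').2⟩
  choose w hw using hw
  have hp : ∀ r, ∃ v, ∀ t, v ∈ S t ↔ t = r := by
    intro r
    obtain ⟨v, hv, hn⟩ := Finset.not_subset.1 (hself r)
    refine ⟨v, fun t => ⟨fun ht => ?_, fun h => h ▸ hv⟩⟩
    by_contra hne
    exact hn (Finset.mem_sup.2 ⟨t, by simp [hne], ht⟩)
  have hcount : ∀ r, (Finset.univ.filter (fun j => w j = r)).card ≤
      (Finset.univ.filter (fun j => u j = r)).card := by
    intro r
    obtain ⟨v, hv⟩ := hp r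
    simpa [hw, hv] using hle v
  have hmap : Multiset.map w Finset.univ.val = Multiset.map u Finset.univ.val := by
    apply Multiset.eq_of_le_of_card_le
    · rw [Multiset.le_iff_count]
      intro r
      have h := hcount r
      simp only [Multiset.count_map]
      simpa [Finset.card_def, eq_comm] using h
    · simp
  have := congrArg (Multiset.map S) hmap
  rw [Multiset.map_map, Multiset.map_map] at this
  rw [show E = S ∘ w from funext hw]
  exact this
end

section
/- Let S = {S_1, …, S_i} be a self semi-induced matching in a simple hypergraph H. Then for every k ≥ 1 and all indices u_1, …, u_k ∈ {1, …, i} (not necessarily distinct), the monomial m(S_{u_1})⋯m(S_{u_k}) lies in I(H)^k but does not lie in 𝔪·I(H)^k, where 𝔪 = ⟨x_v : v ∈ V⟩ is the ideal generated by all the variables; that is, m(S_{u_1})⋯m(S_{u_k}) is a minimal monomial generator of I(H)^k. -/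
open MvPolynomial

theorem aux_count {V : Type*} [DecidableEq V] {i k : ℕ} (S : Fin i → Finset V)
    (hself : ∀ r : Fin i, ¬ S r ⊆ (Finset.univ.erase r).sup S)
    (u r : Fin k → Fin i) (w : V)
    (h : ∀ v, (if v = w then 1 else 0) + ∑ j, (if v ∈ S (r j) then 1 else 0)
      ≤ ∑ j, (if v ∈ S (u j) then 1 else 0)) : False := by
  have hp : ∀ q, ∃ p, ∀ s, p ∈ S s ↔ s = q := by
    intro q
    obtain ⟨p, hp1, hp2⟩ := Finset.not_subset.1 (hself q)
    refine ⟨p, fun s => ⟨fun hs => ?_, fun hs => hs ▸ hp1⟩⟩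
    by_contra hne
    exact hp2 (Finset.mem_sup.2 ⟨s, by simp [hne], hs⟩)
  choose p hp using hp
  have hle : ∀ q ∈ (Finset.univ : Finset (Fin i)),
      (∑ j, if r j = q then 1 else 0) ≤ (∑ j, if u j = q then 1 else 0) := by
    intro q _
    have := h (p q)
    simp only [hp] at this
    omega
  have hsum : ∀ f : Fin k → Fin i, ∑ q, (∑ j, if f j = q then 1 else 0) = k := by
    intro f
    rw [Finset.sum_comm]
    simp
  have heq := (Finset.sum_eq_sum_iff_of_le hle).1 ((hsum r).trans (hsum u).symm)
  have hx : ∀ f : Fin k → Fin i, ∑ j, (if w ∈ S (f j) then 1 else 0)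
      = ∑ q, (∑ j, if f j = q then 1 else 0) * (if w ∈ S q then 1 else 0) := by
    intro f
    simp only [Finset.sum_mul]
    rw [Finset.sum_comm]
    simp only [ite_mul, one_mul, zero_mul, Finset.sum_ite_eq, Finset.mem_univ, if_true]
  have h1 := h w
  rw [hx r, hx u, Finset.sum_congr rfl (fun q hq => by rw [heq q hq])] at h1
  simp at h1

theorem aux_prod {V K : Type*} [DecidableEq V] [Field K] (e : Finset V) :
    (∏ v ∈ e, (X v : MvPolynomial V K)) = monomial (∑ v ∈ e, Finsupp.single v 1) 1 := by
  rw [monomial_sum_one]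
  rfl

theorem aux_apply {V : Type*} [DecidableEq V] (e : Finset V) (v : V) :
    (∑ a ∈ e, Finsupp.single a 1 : V →₀ ℕ) v = if v ∈ e then 1 else 0 := by
  simp [Finsupp.finsetSum_apply, Finsupp.single_apply]


/-- If `S = {S_1, …, S_i}` is a self semi-induced matching in a simple hypergraph `H`,
then for every `k ≥ 1` and all indices `u_1, …, u_k`, the monomial
`m(S_{u_1})⋯m(S_{u_k})` lies in `I(H)^k` but not in `𝔪·I(H)^k`, i.e. it is a
minimal monomial generator of `I(H)^k`. -/
theorem stmt_1 {V K : Type*} [Fintype V] [DecidableEq V] [Field K]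
    (H : Finset (Finset V))
    (hedge : ∀ e ∈ H, 2 ≤ e.card)
    (hsimple : ∀ e ∈ H, ∀ e' ∈ H, e ⊆ e' → e = e')
    {i : ℕ} (S : Fin i → Finset V)
    (hSinj : Function.Injective S)
    (hSH : ∀ r, S r ∈ H)
    (hself : ∀ r : Fin i, ¬ S r ⊆ (Finset.univ.erase r).sup S)
    (hsemi : ∀ e ∈ H, e ⊆ Finset.univ.sup S → ∃ r, e = S r)
    {k : ℕ} (hk : 1 ≤ k) (u : Fin k → Fin i) :
    (∏ j, ∏ v ∈ S (u j), (X v : MvPolynomial V K)) ∈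
      (Ideal.span ((fun e : Finset V => ∏ v ∈ e, (X v : MvPolynomial V K)) '' ↑H)) ^ k ∧
    (∏ j, ∏ v ∈ S (u j), (X v : MvPolynomial V K)) ∉
      Ideal.span (Set.range (X : V → MvPolynomial V K)) *
        (Ideal.span ((fun e : Finset V => ∏ v ∈ e, (X v : MvPolynomial V K)) '' ↑H)) ^ k := by
  refine ⟨?_, fun hmem => ?_⟩
  · have := Ideal.prod_mem_prod (s := (Finset.univ : Finset (Fin k)))
      (I := fun _ => Ideal.span ((fun e : Finset V => ∏ v ∈ e, (X v : MvPolynomial V K)) '' ↑H))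
      (x := fun j => ∏ v ∈ S (u j), (X v : MvPolynomial V K))
      (fun j _ => Ideal.subset_span ⟨S (u j), hSH _, rfl⟩)
    simpa using this
  · set T : Set (V →₀ ℕ) := {d | ∃ w : V, ∃ E : Fin k → Finset V, (∀ j, E j ∈ H) ∧
      d = Finsupp.single w 1 + ∑ j, ∑ v ∈ E j, Finsupp.single v 1} with hT
    have hJ : Ideal.span (Set.range (X : V → MvPolynomial V K)) *
        (Ideal.span ((fun e : Finset V => ∏ v ∈ e, (X v : MvPolynomial V K)) '' ↑H)) ^ k
        ≤ Ideal.span ((fun s => monomial s (1 : K)) '' T) := by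
      rw [Ideal.span, Ideal.span, Submodule.span_pow, ← Ideal.span, ← Ideal.span,
        Ideal.span_mul_span', Ideal.span_le]
      rintro _ ⟨_, ⟨w, rfl⟩, b, hb, rfl⟩
      obtain ⟨f, rfl⟩ := Set.mem_pow.1 hb
      choose E hE hEf using fun j => (f j).2
      refine Ideal.subset_span ⟨_, ⟨w, E, hE, rfl⟩, ?_⟩
      simp only [List.prod_ofFn, ← hEf, aux_prod]
      rw [← monomial_sum_one, X, monomial_mul, one_mul]
    have h2 := hJ hmem
    simp only [aux_prod] at h2
    rw [← monomial_sum_one, mem_ideal_span_monomial_image] at h2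
    obtain ⟨_, ⟨w, E, hE, rfl⟩, hle⟩ := h2 _ (by
      rw [mem_support_iff, coeff_monomial, if_pos rfl]; exact one_ne_zero)
    have hle' : ∀ v, (if v = w then 1 else 0) + ∑ j, (if v ∈ E j then 1 else 0)
        ≤ ∑ j, (if v ∈ S (u j) then 1 else 0) := by
      intro v
      have := hle v
      simp only [Finsupp.add_apply, Finsupp.finsetSum_apply _ (fun j => _)] at this
      simpa only [Finsupp.coe_add, Pi.add_apply, Finsupp.coe_finsetSum, Finset.sum_apply,
        Finsupp.single_apply, Finset.sum_ite_eq', Finset.sum_ite_eq, eq_comm] using this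
    have hEr : ∀ j, ∃ r, E j = S r := by
      intro j
      refine hsemi _ (hE j) fun v hv => ?_
      by_contra hno
      have hno' : ∀ r, v ∉ S r := fun r hr => hno (Finset.mem_sup.2 ⟨r, by simp, hr⟩)
      have h3 := hle' v
      have h4 := Finset.single_le_sum (f := fun j => if v ∈ E j then 1 else 0)
        (fun _ _ => Nat.zero_le _) (Finset.mem_univ j)
      simp only [hno', if_false, Finset.sum_const_zero] at h3
      simp only [hv, if_true] at h4
      omega
    choose r hr using hEr
    simp only [hr] at hle'
    exact aux_count S hself u r w hle'
end

section
/- Let S = {S_1, …, S_i} be a self semi-induced matching in a simple hypergraph H and let t ≥ 1. Then the monomials m(S_1)^{a_1}⋯m(S_i)^{a_i}, as (a_1, …, a_i) ranges over the vectors of nonnegative integers with a_1 + … + a_i = t, are pairwise distinct and each lies in I(H)^t but not in 𝔪·I(H)^t, where 𝔪 = ⟨x_v : v ∈ V⟩. In particular, the set of monomials belonging to I(H)^t but not to 𝔪·I(H)^t has cardinality at least binomial(t + i − 1, i − 1), so I(H)^t has at least binomial(t + i − 1, i − 1) minimal monomial generators. -/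
open MvPolynomial

/-- exponent vector of the squarefree monomial of an edge -/
noncomputable def edgeExp {V : Type*} [DecidableEq V] (e : Finset V) : V →₀ ℕ :=
  ∑ v ∈ e, Finsupp.single v 1

theorem edgeExp_apply {V : Type*} [DecidableEq V] (e : Finset V) (w : V) :
    edgeExp e w = if w ∈ e then 1 else 0 := by
  simp [edgeExp, Finsupp.finsetSum_apply, Finsupp.single_apply]

theorem prod_X_eq {V K : Type*} [DecidableEq V] [Field K] (e : Finset V) :
    (∏ v ∈ e, (X v : MvPolynomial V K)) = monomial (edgeExp e) 1 := by
  rw [edgeExp, monomial_sum_one]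
  rfl

theorem prod_pow_eq {V K : Type*} [DecidableEq V] [Field K] {i : ℕ}
    (S : Fin i → Finset V) (a : Fin i → ℕ) :
    (∏ r, (∏ v ∈ S r, (X v : MvPolynomial V K)) ^ a r) =
      monomial (∑ r, a r • edgeExp (S r)) 1 := by
  rw [monomial_sum_one]
  refine Finset.prod_congr rfl fun r _ => ?_
  rw [prod_X_eq, monomial_pow, one_pow]

theorem pow_le_span {V K : Type*} [DecidableEq V] [Field K] (H : Finset (Finset V)) (n : ℕ) :
    (Ideal.span ((fun e : Finset V => ∏ v ∈ e, (X v : MvPolynomial V K)) '' ↑H)) ^ n ≤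
      Ideal.span ((fun s => monomial s (1 : K)) '' {d : V →₀ ℕ | ∃ l : Multiset (Finset V),
        l.card = n ∧ (∀ e ∈ l, e ∈ H) ∧ d = (l.map edgeExp).sum}) := by
  induction n with
  | zero =>
    rw [pow_zero, Ideal.one_eq_top, top_le_iff, Ideal.eq_top_iff_one]
    apply Ideal.subset_span
    exact ⟨0, ⟨0, by simp⟩, rfl⟩
  | succ n ih =>
    rw [pow_succ]
    refine (Ideal.mul_mono_left ih).trans ?_
    rw [Ideal.span_mul_span', Ideal.span_le]
    rintro _ ⟨_, ⟨d, ⟨l, hl, hlH, rfl⟩, rfl⟩, _, ⟨e, he, rfl⟩, rfl⟩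
    apply Ideal.subset_span
    refine ⟨_, ⟨e ::ₘ l, by simp [hl], ?_, rfl⟩, ?_⟩
    · intro e' he'
      rcases Multiset.mem_cons.1 he' with rfl | h
      · exact he
      · exact hlH _ h
    · simp only [prod_X_eq, monomial_mul, Multiset.map_cons, Multiset.sum_cons, one_mul]
      rw [add_comm]

theorem mul_pow_le_span {V K : Type*} [DecidableEq V] [Field K]
    (H : Finset (Finset V)) (n : ℕ) :
    Ideal.span (Set.range (X : V → MvPolynomial V K)) *
    (Ideal.span ((fun e : Finset V => ∏ v ∈ e, (X v : MvPolynomial V K)) '' ↑H)) ^ n ≤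
      Ideal.span ((fun s => monomial s (1 : K)) '' {d : V →₀ ℕ | ∃ v, ∃ l : Multiset (Finset V),
        l.card = n ∧ (∀ e ∈ l, e ∈ H) ∧ d = Finsupp.single v 1 + (l.map edgeExp).sum}) := by
  refine (Ideal.mul_mono_right (pow_le_span H n)).trans ?_
  rw [Ideal.span_mul_span', Ideal.span_le]
  rintro _ ⟨_, ⟨v, rfl⟩, _, ⟨d, ⟨l, hl, hlH, rfl⟩, rfl⟩, rfl⟩
  apply Ideal.subset_span
  refine ⟨_, ⟨v, l, hl, hlH, rfl⟩, ?_⟩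
  simp [X, monomial_mul]

theorem multiset_lift {A B : Type*} (f : A → B) (l : Multiset B) (h : ∀ e ∈ l, ∃ r, e = f r) :
    ∃ l' : Multiset A, l = l'.map f := by
  induction l using Multiset.induction with
  | empty => exact ⟨0, by simp⟩
  | cons e l ih =>
    obtain ⟨l', hl'⟩ := ih fun e he => h e (Multiset.mem_cons_of_mem he)
    obtain ⟨r, rfl⟩ := h e (Multiset.mem_cons_self _ _)
    exact ⟨r ::ₘ l', by simp [hl']⟩

theorem exp_at {V : Type*} [DecidableEq V] {i : ℕ} (S : Fin i → Finset V) (w : Fin i → V)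
    (hw : ∀ r r', w r ∈ S r' ↔ r' = r) (a : Fin i → ℕ) (r : Fin i) :
    (∑ r, a r • edgeExp (S r)) (w r) = a r := by
  simp [Finsupp.finsetSum_apply, edgeExp_apply, hw]

theorem not_mem_aux {V : Type*} [DecidableEq V]
    (H : Finset (Finset V)) {i : ℕ} (S : Fin i → Finset V) (w : Fin i → V)
    (hw : ∀ r r', w r ∈ S r' ↔ r' = r)
    (hsemi : ∀ e ∈ H, e ⊆ Finset.univ.sup S → ∃ r, e = S r)
    (t : ℕ) (a : Fin i → ℕ) (ha : ∑ r, a r = t) (v : V) (l : Multiset (Finset V))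
    (hl : l.card = t) (hlH : ∀ e ∈ l, e ∈ H)
    (hle : Finsupp.single v 1 + (l.map edgeExp).sum ≤ ∑ r, a r • edgeExp (S r)) : False := by
  have h1 : ∀ e ∈ l, ∃ r, e = S r := by
    intro e he
    refine hsemi e (hlH e he) fun u hu => ?_
    have h2 : edgeExp e ≤ (l.map edgeExp).sum :=
      Multiset.le_sum_of_mem (Multiset.mem_map_of_mem _ he)
    have h3 := (h2.trans (le_add_self.trans hle)) u
    rw [edgeExp_apply, if_pos hu] at h3
    by_contra hn
    have : ∀ r, u ∉ S r := by simpa [Finset.mem_sup] using hn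
    simp [Finsupp.finsetSum_apply, edgeExp_apply, this] at h3
  obtain ⟨l', rfl⟩ := multiset_lift S l h1
  have hs : ((l'.map S).map edgeExp).sum = ∑ r, l'.count r • edgeExp (S r) := by
    rw [Multiset.map_map, Finset.sum_multiset_map_count]
    refine Finset.sum_subset (Finset.subset_univ _) fun r _ hr => ?_
    rw [Multiset.count_eq_zero_of_notMem (by simpa using hr), zero_smul]
  rw [hs] at hle
  have hc : ∀ r, l'.count r ≤ a r := by
    intro r
    have := (le_add_self.trans hle) (w r)
    rwa [exp_at S w hw, exp_at S w hw] at this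
  have hsum : ∑ r, l'.count r = ∑ r, a r := by
    rw [ha, ← hl, Multiset.card_map]
    exact Multiset.sum_count_eq_card fun _ _ => Finset.mem_univ _
  have heq : ∀ r, l'.count r = a r := fun r =>
    (Finset.sum_eq_sum_iff_of_le fun r _ => hc r).1 hsum r (Finset.mem_univ r)
  simp only [heq] at hle
  have := hle v
  simp at this

/-- If `S = {S_1, …, S_i}` is a self semi-induced matching in a simple hypergraph `H`
and `t ≥ 1`, then the monomials `m(S_1)^{a_1}⋯m(S_i)^{a_i}`, for `a_1 + … + a_i = t`,
are pairwise distinct and each lies in `I(H)^t` but not in `𝔪·I(H)^t`; in particular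
the set of monomials belonging to `I(H)^t` but not to `𝔪·I(H)^t` (the minimal monomial
generators of `I(H)^t`) has at least `(t + i − 1).choose (i − 1)` elements. -/
theorem stmt_10 {V K : Type*} [Fintype V] [DecidableEq V] [Field K]
    (H : Finset (Finset V))
    (hedge : ∀ e ∈ H, 2 ≤ e.card)
    (hsimple : ∀ e ∈ H, ∀ e' ∈ H, e ⊆ e' → e = e')
    {i : ℕ} (hi : 1 ≤ i) (S : Fin i → Finset V)
    (hSinj : Function.Injective S)
    (hSH : ∀ r, S r ∈ H)
    (hself : ∀ r : Fin i, ¬ S r ⊆ (Finset.univ.erase r).sup S)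
    (hsemi : ∀ e ∈ H, e ⊆ Finset.univ.sup S → ∃ r, e = S r)
    (t : ℕ) (ht : 1 ≤ t) :
    (∀ a b : Fin i → ℕ, (∑ r, a r) = t → (∑ r, b r) = t →
      (∏ r, (∏ v ∈ S r, (X v : MvPolynomial V K)) ^ a r) =
        (∏ r, (∏ v ∈ S r, (X v : MvPolynomial V K)) ^ b r) → a = b) ∧
    (∀ a : Fin i → ℕ, (∑ r, a r) = t →
      (∏ r, (∏ v ∈ S r, (X v : MvPolynomial V K)) ^ a r) ∈
        (Ideal.span ((fun e : Finset V => ∏ v ∈ e, (X v : MvPolynomial V K)) '' ↑H)) ^ t ∧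
      (∏ r, (∏ v ∈ S r, (X v : MvPolynomial V K)) ^ a r) ∉
        Ideal.span (Set.range (X : V → MvPolynomial V K)) *
          (Ideal.span ((fun e : Finset V => ∏ v ∈ e, (X v : MvPolynomial V K)) '' ↑H)) ^ t) ∧
    (∃ G : Finset (MvPolynomial V K),
      (↑G ⊆ {p : MvPolynomial V K | (∃ s : V →₀ ℕ, p = MvPolynomial.monomial s (1 : K)) ∧
        p ∈ (Ideal.span
          ((fun e : Finset V => ∏ v ∈ e, (X v : MvPolynomial V K)) '' ↑H)) ^ t ∧
        p ∉ Ideal.span (Set.range (X : V → MvPolynomial V K)) *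
          (Ideal.span
            ((fun e : Finset V => ∏ v ∈ e, (X v : MvPolynomial V K)) '' ↑H)) ^ t}) ∧
      (t + i - 1).choose (i - 1) ≤ G.card) := by
  have hw' : ∀ r, ∃ u, u ∈ S r ∧ u ∉ (Finset.univ.erase r).sup S := fun r =>
    Finset.not_subset.1 (hself r)
  choose w hwS hwn using hw'
  have hw : ∀ r r', w r ∈ S r' ↔ r' = r := by
    intro r r'
    constructor
    · intro h
      by_contra hne
      exact hwn r (Finset.mem_sup.2 ⟨r', by simp [hne], h⟩)
    · rintro rfl
      exact hwS _
  have hinj : ∀ a b : Fin i → ℕ,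
      (∏ r, (∏ v ∈ S r, (X v : MvPolynomial V K)) ^ a r) =
        (∏ r, (∏ v ∈ S r, (X v : MvPolynomial V K)) ^ b r) → a = b := by
    intro a b h
    rw [prod_pow_eq, prod_pow_eq] at h
    have h' := monomial_left_injective (one_ne_zero : (1 : K) ≠ 0) h
    funext r
    rw [← exp_at S w hw a r, h', exp_at S w hw b r]
  have hmem : ∀ a : Fin i → ℕ, (∑ r, a r) = t →
      (∏ r, (∏ v ∈ S r, (X v : MvPolynomial V K)) ^ a r) ∈
        (Ideal.span ((fun e : Finset V => ∏ v ∈ e, (X v : MvPolynomial V K)) '' ↑H)) ^ t ∧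
      (∏ r, (∏ v ∈ S r, (X v : MvPolynomial V K)) ^ a r) ∉
        Ideal.span (Set.range (X : V → MvPolynomial V K)) *
          (Ideal.span ((fun e : Finset V => ∏ v ∈ e, (X v : MvPolynomial V K)) '' ↑H)) ^ t := by
    intro a ha
    constructor
    · rw [← ha, ← Finset.prod_pow_eq_pow_sum]
      exact Ideal.prod_mem_prod fun r _ =>
        Ideal.pow_mem_pow (Ideal.subset_span (Set.mem_image_of_mem _ (hSH r))) _
    · intro h
      have h := mul_pow_le_span H t h
      rw [prod_pow_eq, mem_ideal_span_monomial_image] at h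
      obtain ⟨d, ⟨v, l, hl, hlH, rfl⟩, hle⟩ := h (∑ r, a r • edgeExp (S r)) (by simp)
      exact not_mem_aux H S w hw hsemi t a ha v l hl hlH hle
  refine ⟨fun a b _ _ => hinj a b, hmem, ?_⟩
  classical
  refine ⟨(Finset.piAntidiag Finset.univ t).image
    fun a : Fin i → ℕ => ∏ r, (∏ v ∈ S r, (X v : MvPolynomial V K)) ^ a r, ?_, ?_⟩
  · intro p hp
    obtain ⟨a, ha, rfl⟩ := Finset.mem_image.1 (Finset.mem_coe.1 hp)
    exact ⟨⟨_, prod_pow_eq S a⟩, hmem a (by simpa using ha)⟩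
  · rw [Finset.card_image_of_injective _ (fun a b => hinj a b)]
    have hcard : (Finset.piAntidiag (Finset.univ : Finset (Fin i)) t).card =
        Fintype.card (Sym (Fin i) t) := by
      rw [← Finset.map_sym_eq_piAntidiag, Finset.card_map]
      simp [Finset.sym_univ]
    rw [hcard, Sym.card_sym_eq_choose, Fintype.card_fin]
    have h1 : t + i - 1 = i + t - 1 := by omega
    have h2 : i - 1 = i + t - 1 - t := by omega
    rw [h1, h2, Nat.choose_symm (by omega)]
end
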